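/- If X and Y are conditionally independent given Z and k_𝒳̈, k_𝒴 are bounded measurable kernels on 𝒳̈ and 𝒴 respectively, then the witness function vanishes identically: Δ(t^{(1)},t^{(2)}) = 0 for every (t^{(1)},t^{(2)}) ∈ 𝒳̈ × 𝒴. Consequently, for any choice of locations, the random vector u_1 built from one sample satisfies E[u_1] = 0. -/

import Mathlib

open MeasureTheory ProbabilityTheory Filter Topology Asymptotics
open scoped RealInnerProductSpace

noncomputable section

namespace CIPaper

/-- A positive definite kernel. -/
def PosDefKernel {D : Type*} (k : D → D → ℝ) : Prop :=
  ∀ (n : ℕ) (x : Fin n → D) (c : Fin n → ℝ),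
    0 ≤ ∑ i : Fin n, ∑ j : Fin n, c i * c j * k (x i) (x j)

/-- The mean embedding of `ν` with respect to the kernel `k`. -/
def meanEmbed {D : Type*} [MeasurableSpace D] (k : D → D → ℝ) (ν : Measure D) (t : D) : ℝ :=
  ∫ x, k x t ∂ν

/-- A kernel is characteristic if the mean embedding is injective on probability measures. -/
def Characteristic {D : Type*} [MeasurableSpace D] (k : D → D → ℝ) : Prop :=
  ∀ P Q : Measure D, IsProbabilityMeasure P → IsProbabilityMeasure Q →
    (∀ t, meanEmbed k P t = meanEmbed k Q t) → P = Q

def BoundedKernel {D : Type*} (k : D → D → ℝ) : Prop := ∃ C, ∀ x y, |k x y| ≤ C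

/-- Assumption 1 of the paper, for the tensor product kernel built from `kX` and `kY` :
the tensor kernel is positive definite, characteristic, bounded, continuous and analytic. -/
structure Assumption1 {DX DY : Type*} [MeasurableSpace DX] [MeasurableSpace DY]
    [NormedAddCommGroup DX] [NormedSpace ℝ DX] [NormedAddCommGroup DY] [NormedSpace ℝ DY]
    (kX : DX → DX → ℝ) (kY : DY → DY → ℝ) : Prop where
  posdef : PosDefKernel fun p q : DX × DY => kX p.1 q.1 * kY p.2 q.2
  charac : Characteristic fun p q : DX × DY => kX p.1 q.1 * kY p.2 q.2
  bounded : BoundedKernel fun p q : DX × DY => kX p.1 q.1 * kY p.2 q.2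
  continuous : Continuous fun pq : (DX × DY) × (DX × DY) => kX pq.1.1 pq.2.1 * kY pq.1.2 pq.2.2
  analytic : ∀ p : DX × DY, AnalyticOnNhd ℝ (fun q : DX × DY => kX p.1 q.1 * kY p.2 q.2) Set.univ

/-- The random metric `d_{p,J}` between two measures, with locations `t`. -/
def dpJ {D : Type*} [MeasurableSpace D] (k : D → D → ℝ) (p : ℕ) {J : ℕ}
    (t : Fin J → D) (P Q : Measure D) : ℝ :=
  ((J : ℝ)⁻¹ * ∑ j : Fin J, |meanEmbed k P (t j) - meanEmbed k Q (t j)| ^ p) ^ ((p : ℝ)⁻¹)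

/-- `P` is the measure `P_{Ẍ⊗Y|Z}` of the paper : a Borel probability measure with
`P(A×B) = E[E[1_A(Ẍ)|Z]·E[1_B(Y)|Z]]` for all measurable `A`, `B`. -/
def IsCondProdMeasure {Ω : Type*} [MeasurableSpace Ω] (μ : Measure Ω)
    {DX DZ DY : Type*} [MeasurableSpace DX] [MeasurableSpace DZ] [MeasurableSpace DY]
    (X : Ω → DX) (Z : Ω → DZ) (Y : Ω → DY) (P : Measure ((DX × DZ) × DY)) : Prop :=
  IsProbabilityMeasure P ∧
    ∀ (A : Set (DX × DZ)) (B : Set DY), MeasurableSet A → MeasurableSet B →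
      (P (A ×ˢ B)).toReal =
        ∫ ω, ((μ[fun ω' => A.indicator (fun _ => (1 : ℝ)) (X ω', Z ω') |
                MeasurableSpace.comap Z inferInstance]) ω)
            * ((μ[fun ω' => B.indicator (fun _ => (1 : ℝ)) (Y ω') |
                MeasurableSpace.comap Z inferInstance]) ω) ∂μ

/-- The witness function `Δ`. -/
def witness {Ω : Type*} [MeasurableSpace Ω] (μ : Measure Ω)
    {DX DZ DY : Type*} [MeasurableSpace DZ]
    (kX : DX × DZ → DX × DZ → ℝ) (kY : DY → DY → ℝ)
    (X : Ω → DX) (Z : Ω → DZ) (Y : Ω → DY) (t1 : DX × DZ) (t2 : DY) : ℝ :=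
  ∫ ω, (kX t1 (X ω, Z ω) -
          (μ[fun ω' => kX t1 (X ω', Z ω') | MeasurableSpace.comap Z inferInstance]) ω)
      * (kY t2 (Y ω) -
          (μ[fun ω' => kY t2 (Y ω') | MeasurableSpace.comap Z inferInstance]) ω) ∂μ

/-- Cramér–Wold characterization: `ν` is the centered Gaussian measure on `ℝ^J` with
covariance matrix `S`. -/
def IsCenteredGaussian {J : ℕ} (S : Matrix (Fin J) (Fin J) ℝ) (ν : Measure (Fin J → ℝ)) : Prop :=
  IsProbabilityMeasure ν ∧
    ∀ a : Fin J → ℝ,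
      ν.map (fun v => ∑ j, a j * v j) =
        gaussianReal 0 (Real.toNNReal (∑ i, ∑ j, a i * S i j * a j))

/-- Convergence in distribution (weak convergence of the image laws). -/
def TendstoInDistribution {Ω : Type*} [MeasurableSpace Ω] (μ : Measure Ω) {E : Type*}
    [TopologicalSpace E] [MeasurableSpace E] (W : ℕ → Ω → E) (ν : Measure E) : Prop :=
  ∀ f : BoundedContinuousFunction E ℝ,
    Tendsto (fun n : ℕ => ∫ ω, f (W n ω) ∂μ) atTop (𝓝 (∫ x, f x ∂ν))

/-- The one-sample statistic `u_i(j)` of the paper (oracle version), where `e1`, `e2` are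
the conditional mean functions. -/
def uStat {Ω DX DZ DY : Type*} (kX : DX × DZ → DX × DZ → ℝ) (kY : DY → DY → ℝ)
    (e1 : DX × DZ → DZ → ℝ) (e2 : DY → DZ → ℝ)
    (xS : ℕ → Ω → DX) (zS : ℕ → Ω → DZ) (yS : ℕ → Ω → DY)
    {J : ℕ} (t : Fin J → (DX × DZ) × DY) (i : ℕ) (j : Fin J) (ω : Ω) : ℝ :=
  (kX (t j).1 (xS i ω, zS i ω) - e1 (t j).1 (zS i ω)) *
    (kY (t j).2 (yS i ω) - e2 (t j).2 (zS i ω))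

/-- `S_n`, the empirical mean of the `u_i`. -/
def SStat {Ω DX DZ DY : Type*} (kX : DX × DZ → DX × DZ → ℝ) (kY : DY → DY → ℝ)
    (e1 : DX × DZ → DZ → ℝ) (e2 : DY → DZ → ℝ)
    (xS : ℕ → Ω → DX) (zS : ℕ → Ω → DZ) (yS : ℕ → Ω → DY)
    {J : ℕ} (t : Fin J → (DX × DZ) × DY) (n : ℕ) (ω : Ω) : Fin J → ℝ :=
  fun j => (n : ℝ)⁻¹ * ∑ i ∈ Finset.range n, uStat kX kY e1 e2 xS zS yS t i j ω

/-- The covariance matrix `Σ = E[u₁ u₁ᵀ]`. -/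
def covMat {Ω DX DZ DY : Type*} [MeasurableSpace Ω] (μ : Measure Ω)
    (kX : DX × DZ → DX × DZ → ℝ) (kY : DY → DY → ℝ)
    (e1 : DX × DZ → DZ → ℝ) (e2 : DY → DZ → ℝ)
    (xS : ℕ → Ω → DX) (zS : ℕ → Ω → DZ) (yS : ℕ → Ω → DY)
    {J : ℕ} (t : Fin J → (DX × DZ) × DY) : Matrix (Fin J) (Fin J) ℝ :=
  Matrix.of fun j j' =>
    ∫ ω, uStat kX kY e1 e2 xS zS yS t 0 j ω * uStat kX kY e1 e2 xS zS yS t 0 j' ω ∂μ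

/-- The empirical covariance matrix `Σ̂_n` of the oracle `u_i`. -/
def covHat {Ω DX DZ DY : Type*} (kX : DX × DZ → DX × DZ → ℝ) (kY : DY → DY → ℝ)
    (e1 : DX × DZ → DZ → ℝ) (e2 : DY → DZ → ℝ)
    (xS : ℕ → Ω → DX) (zS : ℕ → Ω → DZ) (yS : ℕ → Ω → DY)
    {J : ℕ} (t : Fin J → (DX × DZ) × DY) (n : ℕ) (ω : Ω) : Matrix (Fin J) (Fin J) ℝ :=
  Matrix.of fun j j' => (n : ℝ)⁻¹ * ∑ i ∈ Finset.range n,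
    uStat kX kY e1 e2 xS zS yS t i j ω * uStat kX kY e1 e2 xS zS yS t i j' ω

/-- The regularized least squares estimator built from the first `r` samples `zs` with
targets `target`, kernel `kZ` and regularization parameter `lam`. -/
def rls {DZ : Type*} (kZ : DZ → DZ → ℝ) (zs : ℕ → DZ) (target : ℕ → ℝ)
    (r : ℕ) (lam : ℝ) (z : DZ) : ℝ :=
  ∑ i : Fin r,
    (((Matrix.of fun i l : Fin r => kZ (zs i) (zs l)) +
        ((r : ℝ) * lam) • (1 : Matrix (Fin r) (Fin r) ℝ))⁻¹.mulVec
      fun i : Fin r => target i) i * kZ (zs i) z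

/-- The statistic `ũ_{i,r}(j)` built from the RLS estimators. -/
def uTildeStat {Ω DX DZ DY : Type*} (kX : DX × DZ → DX × DZ → ℝ) (kY : DY → DY → ℝ)
    {J : ℕ} (kZ1 kZ2 : Fin J → DZ → DZ → ℝ)
    (xS : ℕ → Ω → DX) (zS : ℕ → Ω → DZ) (yS : ℕ → Ω → DY)
    (t : Fin J → (DX × DZ) × DY) (r : ℕ) (lam : ℝ) (i : ℕ) (j : Fin J) (ω : Ω) : ℝ :=
  (kX (t j).1 (xS i ω, zS i ω) -
      rls (kZ1 j) (fun l => zS l ω) (fun l => kX (t j).1 (xS l ω, zS l ω)) r lam (zS i ω)) *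
    (kY (t j).2 (yS i ω) -
      rls (kZ2 j) (fun l => zS l ω) (fun l => kY (t j).2 (yS l ω)) r lam (zS i ω))

/-- `S̃_{n,r}`. -/
def STilde {Ω DX DZ DY : Type*} (kX : DX × DZ → DX × DZ → ℝ) (kY : DY → DY → ℝ)
    {J : ℕ} (kZ1 kZ2 : Fin J → DZ → DZ → ℝ)
    (xS : ℕ → Ω → DX) (zS : ℕ → Ω → DZ) (yS : ℕ → Ω → DY)
    (t : Fin J → (DX × DZ) × DY) (n r : ℕ) (lam : ℝ) (ω : Ω) : Fin J → ℝ :=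
  fun j => (n : ℝ)⁻¹ * ∑ i ∈ Finset.range n,
    uTildeStat kX kY kZ1 kZ2 xS zS yS t r lam i j ω

/-- `Σ_{n,r}`, the empirical covariance matrix of the `ũ_{i,r}`. -/
def covTilde {Ω DX DZ DY : Type*} (kX : DX × DZ → DX × DZ → ℝ) (kY : DY → DY → ℝ)
    {J : ℕ} (kZ1 kZ2 : Fin J → DZ → DZ → ℝ)
    (xS : ℕ → Ω → DX) (zS : ℕ → Ω → DZ) (yS : ℕ → Ω → DY)
    (t : Fin J → (DX × DZ) × DY) (n r : ℕ) (lam : ℝ) (ω : Ω) : Matrix (Fin J) (Fin J) ℝ :=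
  Matrix.of fun j j' => (n : ℝ)⁻¹ * ∑ i ∈ Finset.range n,
    uTildeStat kX kY kZ1 kZ2 xS zS yS t r lam i j ω *
      uTildeStat kX kY kZ1 kZ2 xS zS yS t r lam i j' ω

open scoped Classical in
/-- The inverse square root `M^{-1/2}` of a positive semidefinite matrix. -/
def invSqrtMat {J : ℕ} (M : Matrix (Fin J) (Fin J) ℝ) : Matrix (Fin J) (Fin J) ℝ :=
  if h : M.PosSemidef then
    (h.1.eigenvectorUnitary.1 * Matrix.diagonal (Real.sqrt ∘ h.1.eigenvalues) *
      (star h.1.eigenvectorUnitary : Matrix (Fin J) (Fin J) ℝ))⁻¹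
  else 0

/-- The chi-square distribution with `J` degrees of freedom, realized as the law of the sum of
squares of `J` independent standard Gaussians. -/
def chiSq (J : ℕ) : Measure ℝ :=
  (Measure.pi fun _ : Fin J => gaussianReal 0 1).map fun v => ∑ j, v j ^ 2

/-- Assumption 2 of the paper for the operator `L` on `L²(P_Z)` :
`Tr((L + λ)⁻¹ L) ≤ Q λ^{-γ}`, the trace of the positive operator being computed in any
Hilbert basis. -/
def TraceAssumption {DZ : Type*} [MeasurableSpace DZ] (PZ : Measure DZ)
    (L : Lp ℝ 2 PZ →L[ℝ] Lp ℝ 2 PZ) (Q γ : ℝ) : Prop :=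
  ∀ lam : ℝ, 0 < lam → ∀ (ι : Type) (e : HilbertBasis ι ℝ (Lp ℝ 2 PZ)),
    ∑' i, ⟪(Ring.inverse (L + lam • (1 : Lp ℝ 2 PZ →L[ℝ] Lp ℝ 2 PZ)) * L) (e i), e i⟫ ≤
      Q * lam ^ (-γ)

/-- `P = L^s` : `P` is self-adjoint and acts as `c ^ s` on every eigenvector of `L`
(this determines the fractional power, via functional calculus, of a positive self-adjoint
compact operator). -/
def IsFracPower {H : Type*} [NormedAddCommGroup H] [InnerProductSpace ℝ H]
    (L : H →L[ℝ] H) (s : ℝ) (P : H →L[ℝ] H) : Prop :=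
  (∀ v w : H, ⟪P v, w⟫ = ⟪v, P w⟫) ∧
    ∀ (c : ℝ) (v : H), L v = c • v → P v = c ^ s • v

end CIPaper

open CIPaper

/-!
The residual `k_𝒳̈(t, Ẍ) − E[k_𝒳̈(t, Ẍ) | Z]` is a function of `(Z, X)`. Conditional independence
says that, once `Z` is known, `X` carries no further information on `Y`, so the residual of
`k_𝒴(t', Y)` has zero conditional mean given the whole pair `(Z, X)`. Conditioning on `(Z, X)` and
pulling out the first residual, the expectation of the product of the two residuals vanishes.
-/

namespace CIPaper

section CondExp

variable {Ω : Type*} {m₁ m₂ mΩ : MeasurableSpace Ω} {μ : Measure Ω}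

theorem integral_mul_eq_zero_of_condExp_ae_eq_zero (hm₁ : m₁ ≤ mΩ) [SigmaFinite (μ.trim hm₁)]
    {f g : Ω → ℝ} (hf : AEStronglyMeasurable[m₁] f μ) (hfg : Integrable (f * g) μ)
    (hg : Integrable g μ) (hg_zero : μ[g | m₁] =ᵐ[μ] 0) :
    ∫ ω, f ω * g ω ∂μ = 0 := by
  have pull_out : μ[f * g | m₁] =ᵐ[μ] f * μ[g | m₁] :=
    condExp_mul_of_aestronglyMeasurable_left hf hfg hg
  calc ∫ ω, f ω * g ω ∂μ
      = ∫ ω, (μ[f * g | m₁]) ω ∂μ := (integral_condExp hm₁).symm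
    _ = 0 := by
      refine integral_eq_zero_of_ae ?_
      filter_upwards [pull_out, hg_zero] with ω hω hω_zero
      rw [hω, Pi.mul_apply, hω_zero, Pi.zero_apply, mul_zero]

theorem condExp_sub_condExp_ae_eq_zero_of_ae_eq {E : Type*} [NormedAddCommGroup E]
    [NormedSpace ℝ E] [CompleteSpace E] (hm₁₂ : m₁ ≤ m₂) (hm₂ : m₂ ≤ mΩ) [SigmaFinite (μ.trim hm₂)]
    {g : Ω → E} (hg : Integrable g μ) (hg_eq : μ[g | m₂] =ᵐ[μ] μ[g | m₁]) :
    μ[g - μ[g | m₁] | m₂] =ᵐ[μ] 0 := by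
  have condExp_fixed : μ[μ[g | m₁] | m₂] = μ[g | m₁] :=
    condExp_of_stronglyMeasurable hm₂ (stronglyMeasurable_condExp.mono hm₁₂) integrable_condExp
  filter_upwards [condExp_sub hg (integrable_condExp (f := g) (m := m₁)) m₂, hg_eq]
    with ω hω_sub hω_eq
  rw [hω_sub, Pi.sub_apply, condExp_fixed, hω_eq, sub_self, Pi.zero_apply]

theorem integral_sub_condExp_mul_sub_condExp_eq_zero [IsFiniteMeasure μ] (hm₁₂ : m₁ ≤ m₂)
    (hm₂ : m₂ ≤ mΩ) {p q : ENNReal} [p.HolderConjugate q] {f g : Ω → ℝ}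
    (hf : AEStronglyMeasurable[m₂] f μ) (hfp : MemLp f p μ) (hgq : MemLp g q μ)
    (hg_eq : μ[g | m₂] =ᵐ[μ] μ[g | m₁]) :
    ∫ ω, (f ω - (μ[f | m₁]) ω) * (g ω - (μ[g | m₁]) ω) ∂μ = 0 := by
  have hp : 1 ≤ p := ENNReal.HolderConjugate.one_le p q
  have hq : 1 ≤ q := ENNReal.HolderConjugate.one_le q p
  have hf_res : MemLp (f - μ[f | m₁]) p μ := hfp.sub (hfp.condExp hp)
  have hg_res : MemLp (g - μ[g | m₁]) q μ := hgq.sub (hgq.condExp hq)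
  exact integral_mul_eq_zero_of_condExp_ae_eq_zero hm₂
    (hf.sub (stronglyMeasurable_condExp.mono hm₁₂).aestronglyMeasurable)
    (hf_res.integrable_mul hg_res) (hg_res.integrable hq)
    (condExp_sub_condExp_ae_eq_zero_of_ae_eq hm₁₂ hm₂ (hgq.integrable hq) hg_eq)

end CondExp

variable {Ω DX DZ DY : Type*} [MeasurableSpace Ω] [MeasurableSpace DX]
  [MeasurableSpace DZ] [MeasurableSpace DY] {μ : Measure Ω} {X : Ω → DX} {Z : Ω → DZ} {Y : Ω → DY}

theorem condExp_comap_prodMk_ae_eq_of_condIndepFun [StandardBorelSpace Ω] [IsFiniteMeasure μ]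
    [StandardBorelSpace DX] [Nonempty DX] [StandardBorelSpace DY] [Nonempty DY]
    {E : Type*} [NormedAddCommGroup E] [NormedSpace ℝ E] [CompleteSpace E]
    (hX : Measurable X) (hZ : Measurable Z) (hY : Measurable Y) (hXY : X ⟂ᵢ[Z, hZ; μ] Y)
    {g : DY → E} (hg : StronglyMeasurable g) (hg_int : Integrable (fun ω => g (Y ω)) μ) :
    μ[fun ω => g (Y ω) | MeasurableSpace.comap (fun ω => (Z ω, X ω)) inferInstance]
      =ᵐ[μ] μ[fun ω => g (Y ω) | MeasurableSpace.comap Z inferInstance] := by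
  have hZX : Measurable fun ω => (Z ω, X ω) := hZ.prodMk hX
  have condDistrib_eq : ∀ᵐ ω ∂μ,
      condDistrib Y (fun ω => (Z ω, X ω)) μ (Z ω, X ω) = condDistrib Y Z μ (Z ω) :=
    ae_of_ae_map hZX.aemeasurable
      ((condIndepFun_iff_condDistrib_prod_ae_eq_prodMkRight hY hX hZ).1 hXY)
  filter_upwards [condExp_ae_eq_integral_condDistrib hZX hY.aemeasurable hg hg_int,
    condExp_ae_eq_integral_condDistrib hZ hY.aemeasurable hg hg_int, condDistrib_eq]
    with ω hω_pair hω hω_condDistrib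
  rw [hω_pair, hω, hω_condDistrib]

theorem witness_eq_zero_of_condIndepFun [StandardBorelSpace Ω] [IsFiniteMeasure μ]
    [StandardBorelSpace DX] [Nonempty DX] [StandardBorelSpace DY] [Nonempty DY]
    (hX : Measurable X) (hZ : Measurable Z) (hY : Measurable Y) (hXY : X ⟂ᵢ[Z, hZ; μ] Y)
    {kX : DX × DZ → DX × DZ → ℝ} {kY : DY → DY → ℝ} {t1 : DX × DZ} {t2 : DY}
    (hkX : Measurable (kX t1)) (hkY : Measurable (kY t2)) {p q : ENNReal} [p.HolderConjugate q]
    (hkXp : MemLp (fun ω => kX t1 (X ω, Z ω)) p μ) (hkYq : MemLp (fun ω => kY t2 (Y ω)) q μ) :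
    witness μ kX kY X Z Y t1 t2 = 0 := by
  have hZX : Measurable[MeasurableSpace.comap (fun ω => (Z ω, X ω)) inferInstance]
      fun ω => (Z ω, X ω) := comap_measurable _
  have hkX_pair : StronglyMeasurable[MeasurableSpace.comap (fun ω => (Z ω, X ω)) inferInstance]
      fun ω => kX t1 (X ω, Z ω) :=
    ((hkX.comp measurable_swap).comp hZX).stronglyMeasurable
  exact integral_sub_condExp_mul_sub_condExp_eq_zero (measurable_fst.comp hZX).comap_le
    (hZ.prodMk hX).comap_le hkX_pair.aestronglyMeasurable hkXp hkYq
    (condExp_comap_prodMk_ae_eq_of_condIndepFun hX hZ hY hXY hkY.stronglyMeasurable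
      (hkYq.integrable (ENNReal.HolderConjugate.one_le q p)))

theorem integral_residual_mul_residual_eq_witness {Ω' : Type*} [MeasurableSpace Ω']
    {ν : Measure Ω'} {x : Ω' → DX} {z : Ω' → DZ} {y : Ω' → DY}
    (hlaw : IdentDistrib (fun ω => ((x ω, z ω), y ω)) (fun ω => ((X ω, Z ω), Y ω)) ν μ)
    {kX : DX × DZ → DX × DZ → ℝ} {kY : DY → DY → ℝ} {t1 : DX × DZ} {t2 : DY}
    (hkX : Measurable (kX t1)) (hkY : Measurable (kY t2))
    {eX eY : DZ → ℝ} (heX : Measurable eX) (heY : Measurable eY)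
    (heX_eq : (fun ω => eX (Z ω)) =ᵐ[μ]
      μ[fun ω => kX t1 (X ω, Z ω) | MeasurableSpace.comap Z inferInstance])
    (heY_eq : (fun ω => eY (Z ω)) =ᵐ[μ]
      μ[fun ω => kY t2 (Y ω) | MeasurableSpace.comap Z inferInstance]) :
    ∫ ω, (kX t1 (x ω, z ω) - eX (z ω)) * (kY t2 (y ω) - eY (z ω)) ∂ν =
      witness μ kX kY X Z Y t1 t2 := by
  have hu : Measurable fun s : (DX × DZ) × DY =>
      (kX t1 s.1 - eX s.1.2) * (kY t2 s.2 - eY s.1.2) := by fun_prop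
  calc ∫ ω, (kX t1 (x ω, z ω) - eX (z ω)) * (kY t2 (y ω) - eY (z ω)) ∂ν
      = ∫ ω, (kX t1 (X ω, Z ω) - eX (Z ω)) * (kY t2 (Y ω) - eY (Z ω)) ∂μ :=
        (hlaw.comp hu).integral_eq
    _ = witness μ kX kY X Z Y t1 t2 := by
        refine integral_congr_ae ?_
        filter_upwards [heX_eq, heY_eq] with ω hωX hωY
        rw [hωX, hωY]

theorem BoundedKernel.memLp_comp [IsFiniteMeasure μ] {D : Type*} [MeasurableSpace D]
    {k : D → D → ℝ} (hk : BoundedKernel k) {t : D} (hkt : Measurable (k t))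
    {V : Ω → D} (hV : Measurable V) (p : ENNReal) : MemLp (fun ω => k t (V ω)) p μ := by
  obtain ⟨C, hC⟩ := hk
  exact .of_bound (hkt.comp hV).aestronglyMeasurable C (.of_forall fun ω => hC t (V ω))

end CIPaper

theorem statement_5_general {Ω Ω' DX DZ DY : Type*}
    [MeasurableSpace Ω] [StandardBorelSpace Ω] [MeasurableSpace Ω']
    [MeasurableSpace DX] [StandardBorelSpace DX] [Nonempty DX] [MeasurableSpace DZ]
    [MeasurableSpace DY] [StandardBorelSpace DY] [Nonempty DY]
    {μ : Measure Ω} [IsFiniteMeasure μ] {ν : Measure Ω'}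
    {X : Ω → DX} {Z : Ω → DZ} {Y : Ω → DY}
    (hX : Measurable X) (hZ : Measurable Z) (hY : Measurable Y) (hXY : X ⟂ᵢ[Z, hZ; μ] Y)
    {kX : DX × DZ → DX × DZ → ℝ} {kY : DY → DY → ℝ}
    (hkX : ∀ t1, Measurable (kX t1)) (hkY : ∀ t2, Measurable (kY t2))
    {p q : ENNReal} [p.HolderConjugate q]
    (hkXp : ∀ t1, MemLp (fun ω => kX t1 (X ω, Z ω)) p μ)
    (hkYq : ∀ t2, MemLp (fun ω => kY t2 (Y ω)) q μ)
    {e1 : DX × DZ → DZ → ℝ} {e2 : DY → DZ → ℝ}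
    (he1m : ∀ t1, Measurable (e1 t1)) (he2m : ∀ t2, Measurable (e2 t2))
    (he1 : ∀ t1, (fun ω => e1 t1 (Z ω)) =ᵐ[μ]
      μ[fun ω => kX t1 (X ω, Z ω) | MeasurableSpace.comap Z inferInstance])
    (he2 : ∀ t2, (fun ω => e2 t2 (Z ω)) =ᵐ[μ]
      μ[fun ω => kY t2 (Y ω) | MeasurableSpace.comap Z inferInstance])
    {x : Ω' → DX} {z : Ω' → DZ} {y : Ω' → DY}
    (hlaw : IdentDistrib (fun ω => ((x ω, z ω), y ω)) (fun ω => ((X ω, Z ω), Y ω)) ν μ) :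
    (∀ t1 t2, witness μ kX kY X Z Y t1 t2 = 0) ∧
      ∀ t1 t2, ∫ ω, (kX t1 (x ω, z ω) - e1 t1 (z ω)) * (kY t2 (y ω) - e2 t2 (z ω)) ∂ν = 0 := by
  have witness_zero : ∀ t1 t2, witness μ kX kY X Z Y t1 t2 = 0 := fun t1 t2 =>
    witness_eq_zero_of_condIndepFun hX hZ hY hXY (hkX t1) (hkY t2) (hkXp t1) (hkYq t2)
  refine ⟨witness_zero, fun t1 t2 => ?_⟩
  rw [integral_residual_mul_residual_eq_witness hlaw (hkX t1) (hkY t2) (he1m t1) (he2m t2)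
    (he1 t1) (he2 t2), witness_zero]

/-- under conditional independence the witness function vanishes and
`E[u₁] = 0` for any choice of locations. -/
theorem statement_5
    (dx dy dz : ℕ) (hdx : 1 ≤ dx) (hdy : 1 ≤ dy) (hdz : 1 ≤ dz)
    {Ω : Type} [MeasurableSpace Ω] [StandardBorelSpace Ω] [Nonempty Ω]
    (μ : Measure Ω) [IsProbabilityMeasure μ]
    (X : Ω → Fin dx → ℝ) (Z : Ω → Fin dz → ℝ) (Y : Ω → Fin dy → ℝ)
    (hX : Measurable X) (hZ : Measurable Z) (hY : Measurable Y)
    (kX : ((Fin dx → ℝ) × (Fin dz → ℝ)) → ((Fin dx → ℝ) × (Fin dz → ℝ)) → ℝ) (kY : (Fin dy → ℝ) → (Fin dy → ℝ) → ℝ)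
    (hkXm : Measurable fun q : ((Fin dx → ℝ) × (Fin dz → ℝ)) × ((Fin dx → ℝ) × (Fin dz → ℝ)) => kX q.1 q.2)
    (hkYm : Measurable fun q : (Fin dy → ℝ) × (Fin dy → ℝ) => kY q.1 q.2)
    (hkXb : BoundedKernel kX) (hkYb : BoundedKernel kY)
    (e1 : ((Fin dx → ℝ) × (Fin dz → ℝ)) → (Fin dz → ℝ) → ℝ) (e2 : (Fin dy → ℝ) → (Fin dz → ℝ) → ℝ)
    (he1m : ∀ t1, Measurable (e1 t1)) (he2m : ∀ t2, Measurable (e2 t2))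
    (he1 : ∀ t1, (fun ω => e1 t1 (Z ω)) =ᵐ[μ]
      μ[fun ω' => kX t1 (X ω', Z ω') | MeasurableSpace.comap Z inferInstance])
    (he2 : ∀ t2, (fun ω => e2 t2 (Z ω)) =ᵐ[μ]
      μ[fun ω' => kY t2 (Y ω') | MeasurableSpace.comap Z inferInstance])
    (xS1 : Ω → Fin dx → ℝ) (zS1 : Ω → Fin dz → ℝ) (yS1 : Ω → Fin dy → ℝ)
    (hxS1 : Measurable xS1) (hzS1 : Measurable zS1) (hyS1 : Measurable yS1)
    (hlaw1 : μ.map (fun ω => ((xS1 ω, zS1 ω), yS1 ω)) = μ.map fun ω => ((X ω, Z ω), Y ω))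
    (hH0 : CondIndepFun (MeasurableSpace.comap Z inferInstance) hZ.comap_le X Y μ) :
    (∀ (t1 : ((Fin dx → ℝ) × (Fin dz → ℝ))) (t2 : Fin dy → ℝ), witness μ kX kY X Z Y t1 t2 = 0) ∧
      ∀ (J : ℕ) (t : Fin J → (((Fin dx → ℝ) × (Fin dz → ℝ)) × (Fin dy → ℝ))) (j : Fin J),
        ∫ ω, (kX (t j).1 (xS1 ω, zS1 ω) - e1 (t j).1 (zS1 ω)) *
            (kY (t j).2 (yS1 ω) - e2 (t j).2 (zS1 ω)) ∂μ = 0 := by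
  have hkX (t1) : Measurable (kX t1) := hkXm.of_uncurry_left
  have hkY (t2) : Measurable (kY t2) := hkYm.of_uncurry_left
  have hlaw : IdentDistrib (fun ω => ((xS1 ω, zS1 ω), yS1 ω)) (fun ω => ((X ω, Z ω), Y ω)) μ μ :=
    ⟨by fun_prop, by fun_prop, hlaw1⟩
  have ⟨witness_zero, mean_zero⟩ := statement_5_general hX hZ hY hH0 hkX hkY
    (fun t1 => hkXb.memLp_comp (hkX t1) (hX.prodMk hZ) 2)
    (fun t2 => hkYb.memLp_comp (hkY t2) hY 2) he1m he2m he1 he2 hlaw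
  exact ⟨witness_zero, fun J t j => mean_zero (t j).1 (t j).2⟩
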